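/- arXiv:1306.1062 — 3 statements merged into one kernel-verified Lean document; each statement's English description precedes it below -/
import Mathlib

section
/- Let d ≥ 1, let ν be a σ-finite Borel measure on ℝ^d with 0 < ν({y : ‖y‖ > 1}) < ∞, let b ∈ ℝ^d, let β = 1/ν({y : ‖y‖ > 1}), and let F be the pushforward of the restriction of ν to {y : ‖y‖ > 1} under the translation y ↦ y + β·b. Let π ∈ ℝ^d satisfy F({z : ⟨π, z⟩ < −1}) = 0. Define a = 1/(1 + β⟨π, b⟩) if β⟨π, b⟩ > 0 and a = 1 otherwise, and set π'' = (a/(2 + a‖π‖))·π. Then ν({y : ⟨π'', y⟩ < −1}) = 0. -/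
open MeasureTheory
open scoped RealInnerProductSpace ENNReal

/-- The scalar `a`, equal to `(1 + t)⁻¹` for `t > 0` and to `1` otherwise, satisfies `0 < a` and
`a * (1 + t) ≤ 1`. -/
theorem renormalizing_factor_pos_and_mul_le_one (t : ℝ) :
    0 < (if 0 < t then (1 + t)⁻¹ else 1) ∧ (if 0 < t then (1 + t)⁻¹ else 1) * (1 + t) ≤ 1 := by
  split_ifs with ht
  · have h : 0 < 1 + t := by linarith
    exact ⟨inv_pos.mpr h, (inv_mul_cancel₀ h.ne').le⟩
  · exact ⟨one_pos, by linarith⟩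

/-- A point where the renormalized portfolio jumps below `-1` lies outside the closed unit ball,
and the shifted jump of the original portfolio there is below `-1`. -/
theorem one_lt_norm_and_inner_add_lt_of_inner_smul_lt {E : Type*} [NormedAddCommGroup E]
    [InnerProductSpace ℝ E] {p y : E} {a t : ℝ} (ha : 0 < a) (hat : a * (1 + t) ≤ 1)
    (h : ⟪(a / (2 + a * ‖p‖)) • p, y⟫ < -1) : 1 < ‖y‖ ∧ ⟪p, y⟫ + t < -1 := by
  have hnn : 0 ≤ a * ‖p‖ := by positivity
  have hpos : 0 < 2 + a * ‖p‖ := by positivity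
  rw [real_inner_smul_left, div_mul_eq_mul_div, div_lt_iff₀ hpos] at h
  constructor
  · by_contra! hy
    have hcs : -(‖p‖ * ‖y‖) ≤ ⟪p, y⟫ := neg_le_of_abs_le (abs_real_inner_le_norm p y)
    have h₁ : a * -(‖p‖ * ‖y‖) ≤ a * ⟪p, y⟫ := by gcongr
    have h₂ : a * ‖p‖ * ‖y‖ ≤ a * ‖p‖ := mul_le_of_le_one_right hnn hy
    linarith
  · have hneg : a * (⟪p, y⟫ + t + 1) < 0 := by linarith
    linarith [neg_of_mul_neg_right hneg ha.le]

/-- If `F {⟪π, z⟫ < -1} = 0` where `F` is the translated restricted measure,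
then the renormalized vector `π'' = (a / (2 + a‖π‖)) • π` (with `a = 1/(1 + β⟪π, b⟫)` when
`β⟪π, b⟫ > 0` and `a = 1` otherwise) satisfies `ν {⟪π'', y⟫ < -1} = 0`. -/
theorem stmt_1 {d : ℕ} (hd : 1 ≤ d)
    (ν : Measure (EuclideanSpace ℝ (Fin d))) [SigmaFinite ν]
    (b : EuclideanSpace ℝ (Fin d))
    (h0 : 0 < ν {y : EuclideanSpace ℝ (Fin d) | 1 < ‖y‖})
    (hfin : ν {y : EuclideanSpace ℝ (Fin d) | 1 < ‖y‖} < ⊤)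
    (β : ℝ)
    (hβ : β = ((ν {y : EuclideanSpace ℝ (Fin d) | 1 < ‖y‖}).toReal)⁻¹)
    (F : Measure (EuclideanSpace ℝ (Fin d)))
    (hF : F = Measure.map (fun y => y + β • b)
      (ν.restrict {y : EuclideanSpace ℝ (Fin d) | 1 < ‖y‖}))
    (π : EuclideanSpace ℝ (Fin d))
    (hπ : F {z : EuclideanSpace ℝ (Fin d) | ⟪π, z⟫ < -1} = 0)
    (a : ℝ)
    (ha : a = if 0 < β * ⟪π, b⟫ then (1 + β * ⟪π, b⟫)⁻¹ else 1)
    (π'' : EuclideanSpace ℝ (Fin d))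
    (hπ'' : π'' = (a / (2 + a * ‖π‖)) • π) :
    ν {y : EuclideanSpace ℝ (Fin d) | ⟪π'', y⟫ < -1} = 0 := by
  obtain ⟨ha_pos, ha_le⟩ := renormalizing_factor_pos_and_mul_le_one (β * ⟪π, b⟫)
  rw [← ha] at ha_pos ha_le
  have hmeas : MeasurableSet {z : EuclideanSpace ℝ (Fin d) | ⟪π, z⟫ < -1} :=
    measurableSet_lt (by fun_prop) measurable_const
  have hshift : Measurable fun y : EuclideanSpace ℝ (Fin d) => y + β • b := by fun_prop
  rw [hF, Measure.map_apply hshift hmeas, Measure.restrict_apply (hshift hmeas)] at hπ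
  refine measure_mono_null (fun y hy => ?_) hπ
  rw [Set.mem_ofPred_eq, hπ''] at hy
  obtain ⟨hy_norm, hy_inner⟩ := one_lt_norm_and_inner_add_lt_of_inner_smul_lt ha_pos ha_le hy
  refine ⟨?_, hy_norm⟩
  simpa [inner_add_right, real_inner_smul_right] using hy_inner
end

section
/- Let d ≥ 1, let ν be a σ-finite Borel measure on ℝ^d with 0 < ν({y : ‖y‖ > 1}) < ∞ and ∫_{‖y‖>1} ‖y‖ dν(y) < ∞, let b ∈ ℝ^d, let β = 1/ν({y : ‖y‖ > 1}), and let F be the pushforward of the restriction of ν to {y : ‖y‖ > 1} under the translation y ↦ y + β·b. Assume that for every p ∈ ℝ^d with ν({y : ⟨p, y⟩ < −1}) = 0 one has ⟨p, b⟩ + ∫_{‖y‖>1} ⟨p, y⟩ dν(y) ≤ 0. Then for every π ∈ ℝ^d with F({z : ⟨π, z⟩ < −1}) = 0 one has ∫ ⟨π, z⟩ dF(z) ≤ 0. -/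
open MeasureTheory
open scoped RealInnerProductSpace ENNReal

/-- If for every `p` with `ν {⟪p, y⟫ < -1} = 0` the drift rate
`⟪p, b⟫ + ∫_{‖y‖>1} ⟪p, y⟫ dν` is nonpositive, then for every `π` with
`F {⟪π, z⟫ < -1} = 0` one has `∫ ⟪π, z⟫ dF ≤ 0`. -/
theorem stmt_2 {d : ℕ} (hd : 1 ≤ d)
    (ν : Measure (EuclideanSpace ℝ (Fin d))) [SigmaFinite ν]
    (b : EuclideanSpace ℝ (Fin d))
    (h0 : 0 < ν {y : EuclideanSpace ℝ (Fin d) | 1 < ‖y‖})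
    (hfin : ν {y : EuclideanSpace ℝ (Fin d) | 1 < ‖y‖} < ⊤)
    (hint : Integrable (fun y : EuclideanSpace ℝ (Fin d) => ‖y‖)
      (ν.restrict {y : EuclideanSpace ℝ (Fin d) | 1 < ‖y‖}))
    (β : ℝ)
    (hβ : β = ((ν {y : EuclideanSpace ℝ (Fin d) | 1 < ‖y‖}).toReal)⁻¹)
    (F : Measure (EuclideanSpace ℝ (Fin d)))
    (hF : F = Measure.map (fun y => y + β • b)
      (ν.restrict {y : EuclideanSpace ℝ (Fin d) | 1 < ‖y‖}))
    (hsup : ∀ p : EuclideanSpace ℝ (Fin d),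
      ν {y : EuclideanSpace ℝ (Fin d) | ⟪p, y⟫ < -1} = 0 →
      ⟪p, b⟫ + ∫ y in {y : EuclideanSpace ℝ (Fin d) | 1 < ‖y‖}, ⟪p, y⟫ ∂ν ≤ 0) :
    ∀ π : EuclideanSpace ℝ (Fin d),
      F {z : EuclideanSpace ℝ (Fin d) | ⟪π, z⟫ < -1} = 0 →
      ∫ z, ⟪π, z⟫ ∂F ≤ 0 := by
  intro π hπ
  set A : Set (EuclideanSpace ℝ (Fin d)) := {y | 1 < ‖y‖}
  have hAm : MeasurableSet A := measurableSet_lt measurable_const measurable_norm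
  have hshift : Measurable fun y : EuclideanSpace ℝ (Fin d) => y + β • b :=
    measurable_id.add_const _
  have hinner : Measurable fun z : EuclideanSpace ℝ (Fin d) => ⟪π, z⟫ :=
    measurable_const.inner measurable_id
  have : IsFiniteMeasure (ν.restrict A) := ⟨by simpa using hfin⟩
  have hmass : (ν A).toReal * β = 1 := by
    rw [hβ]
    exact mul_inv_cancel₀ (ENNReal.toReal_pos h0.ne' hfin.ne).ne'
  have hπint : Integrable (fun y => ⟪π, y⟫) (ν.restrict A) := by
    have hid : Integrable (fun y : EuclideanSpace ℝ (Fin d) => y) (ν.restrict A) :=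
      (integrable_norm_iff aestronglyMeasurable_id).1 hint
    exact hid.const_inner π
  have hdrift : ∫ z, ⟪π, z⟫ ∂F = ⟪π, b⟫ + ∫ y in A, ⟪π, y⟫ ∂ν := by
    rw [hF, integral_map hshift.aemeasurable hinner.aestronglyMeasurable]
    simp_rw [inner_add_right, real_inner_smul_right]
    rw [integral_add hπint (integrable_const _), integral_const, measureReal_restrict_apply_univ,
      measureReal_def, smul_eq_mul, ← mul_assoc, hmass, one_mul, add_comm]
  rw [hF, Measure.map_apply hshift (measurableSet_lt hinner measurable_const),
    Measure.restrict_apply (hshift (measurableSet_lt hinner measurable_const))] at hπ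
  -- Small jumps satisfy `⟪π, y⟫ ≥ -‖π‖`, so a positive multiple of `π` is admissible for `ν`.
  set C : ℝ := 1 + ‖π‖ + |β * ⟪π, b⟫| with hC
  have hCpos : 0 < C := by positivity
  have hnull : ν {y | ⟪C⁻¹ • π, y⟫ < -1} = 0 := by
    refine measure_mono_null (fun y hy => ?_) hπ
    have hy' : ⟪π, y⟫ < -C := by
      have h : C⁻¹ * ⟪π, y⟫ < -1 := by simpa [real_inner_smul_left] using hy
      rw [inv_mul_lt_iff₀ hCpos] at h
      linarith
    have habs := le_abs_self (β * ⟪π, b⟫)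
    have habs0 := abs_nonneg (β * ⟪π, b⟫)
    have hnorm := norm_nonneg π
    refine ⟨?_, ?_⟩
    · change ⟪π, y + β • b⟫ < -1
      rw [inner_add_right, real_inner_smul_right]
      linarith
    · change 1 < ‖y‖
      by_contra! hle
      have hcs := (abs_le.1 (abs_real_inner_le_norm π y)).1
      have := mul_le_of_le_one_right hnorm hle
      linarith
  have hscaled := hsup _ hnull
  simp_rw [real_inner_smul_left] at hscaled
  rw [integral_const_mul, ← mul_add] at hscaled
  rw [hdrift]
  exact nonpos_of_mul_nonpos_right hscaled (inv_pos.2 hCpos)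
end

section
/- Let d ≥ 1, let ν be a σ-finite Borel measure on ℝ^d with 0 < ν({y : ‖y‖ > 1}) < ∞, let b ∈ ℝ^d, let β = 1/ν({y : ‖y‖ > 1}), and let F be the pushforward of the restriction of ν to {y : ‖y‖ > 1} under the translation y ↦ y + β·b. Let F̌ be a finite Borel measure on ℝ^d with F̌ ≪ F and F ≪ F̌, F̌(ℝ^d) = ν({y : ‖y‖ > 1}), ∫ ‖y‖ dF̌(y) < ∞ and ∫ y dF̌(y) = 0 (Bochner integral in ℝ^d), and set p = dF̌/dF. Then the function x ↦ x·p(x + β·b) is Bochner integrable on {x : ‖x‖ > 1} with respect to ν and b + ∫_{‖x‖>1} x · p(x + β·b) dν(x) = 0. -/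
open MeasureTheory
open scoped RealInnerProductSpace ENNReal

/-- With `p = dFc/dF` for a finite measure `Fc` equivalent to `F`
with total mass `ν {‖y‖ > 1}`, finite first moment and barycenter `0`, the function
`x ↦ p(x + β•b) • x` is integrable on `{‖x‖ > 1}` with respect to `ν` and
`b + ∫_{‖x‖>1} p(x + β•b) • x dν = 0`. -/
theorem stmt_6 {d : ℕ} (hd : 1 ≤ d)
    (ν : Measure (EuclideanSpace ℝ (Fin d))) [SigmaFinite ν]
    (b : EuclideanSpace ℝ (Fin d))
    (h0 : 0 < ν {y : EuclideanSpace ℝ (Fin d) | 1 < ‖y‖})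
    (hfin : ν {y : EuclideanSpace ℝ (Fin d) | 1 < ‖y‖} < ⊤)
    (β : ℝ)
    (hβ : β = ((ν {y : EuclideanSpace ℝ (Fin d) | 1 < ‖y‖}).toReal)⁻¹)
    (F : Measure (EuclideanSpace ℝ (Fin d)))
    (hF : F = Measure.map (fun y => y + β • b)
      (ν.restrict {y : EuclideanSpace ℝ (Fin d) | 1 < ‖y‖}))
    (Fc : Measure (EuclideanSpace ℝ (Fin d))) [IsFiniteMeasure Fc]
    (hac1 : Fc ≪ F) (hac2 : F ≪ Fc)
    (hmass : Fc Set.univ = ν {y : EuclideanSpace ℝ (Fin d) | 1 < ‖y‖})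
    (hint : Integrable (fun y : EuclideanSpace ℝ (Fin d) => y) Fc)
    (hcenter : (∫ y, y ∂Fc : EuclideanSpace ℝ (Fin d)) = 0)
    (p : EuclideanSpace ℝ (Fin d) → ℝ)
    (hp : p = fun z => (Fc.rnDeriv F z).toReal) :
    IntegrableOn (fun x : EuclideanSpace ℝ (Fin d) => p (x + β • b) • x)
      {y : EuclideanSpace ℝ (Fin d) | 1 < ‖y‖} ν
    ∧ b + ∫ x in {y : EuclideanSpace ℝ (Fin d) | 1 < ‖y‖}, p (x + β • b) • x ∂ν = 0 := by
  have hemb : MeasurableEmbedding (fun y : EuclideanSpace ℝ (Fin d) => y + β • b) :=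
    measurableEmbedding_addRight _
  have hfinite : IsFiniteMeasure
      (ν.restrict {y : EuclideanSpace ℝ (Fin d) | 1 < ‖y‖}) := ⟨by simpa using hfin⟩
  have hFfinite : IsFiniteMeasure F := by rw [hF]; infer_instance
  have hdecomp : Fc.HaveLebesgueDecomposition F :=
    Measure.haveLebesgueDecomposition_of_sigmaFinite Fc F
  have hshift : (fun x : EuclideanSpace ℝ (Fin d) => p (x + β • b) • x) =
      (fun z => p z • (z - β • b)) ∘ (fun y => y + β • b) := by
    funext x
    simp
  have hintF : Integrable (fun z => p z • (z - β • b)) F := by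
    rw [hp]
    exact (integrable_rnDeriv_smul_iff hac1).2 (hint.sub (integrable_const _))
  have hvalF : ∫ z, p z • (z - β • b) ∂F = -b := by
    have hpos : (ν {y : EuclideanSpace ℝ (Fin d) | 1 < ‖y‖}).toReal ≠ 0 :=
      (ENNReal.toReal_pos h0.ne' hfin.ne).ne'
    rw [hp, integral_rnDeriv_smul hac1, integral_sub hint (integrable_const _), hcenter,
      integral_const, measureReal_def, hmass, hβ, smul_smul, mul_inv_cancel₀ hpos, one_smul,
      zero_sub]
  constructor
  · rw [hshift, IntegrableOn, ← hemb.integrable_map_iff, ← hF]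
    exact hintF
  · have hmap := hemb.integral_map (μ := ν.restrict {y | 1 < ‖y‖})
      (fun z => p z • (z - β • b))
    rw [← hF, hvalF] at hmap
    simp only [add_sub_cancel_right] at hmap
    rw [← hmap, add_neg_cancel]
end
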